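/- Let n ≥ 1 be an integer. The image of the map Φ: ℝ² → ℝ³, Φ(s,t) = (x_n(s,t), y_n(s,t), s² + t²), is exactly the set {(u,v,w) ∈ ℝ³ : u² + v² = w^n and w ≥ 0}. -/

import Mathlib

/-!
With `z = s + i t`, the map is `Φ(s,t) = (Re zⁿ, Im zⁿ, |z|²)`. Multiplicativity of `|·|²` gives
`u² + v² = wⁿ` on the image. Conversely, if `u² + v² = wⁿ` with `w ≥ 0`, then any complex `n`-th
root `z` of `u + i v` satisfies `(|z|²)ⁿ = wⁿ`, so `|z|² = w` because `n`-th powers are injective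
on nonnegative reals.
-/

open Real

/-- `x_n(s,t)`. -/
noncomputable def xPoly (n : ℕ) (s t : ℝ) : ℝ :=
  ∑ j ∈ Finset.range (n / 2 + 1), (-1 : ℝ) ^ j * (n.choose (2 * j) : ℝ) * t ^ (2 * j) * s ^ (n - 2 * j)

/-- `y_n(s,t)`. -/
noncomputable def yPoly (n : ℕ) (s t : ℝ) : ℝ :=
  ∑ j ∈ Finset.range ((n + 1) / 2), (-1 : ℝ) ^ j * (n.choose (2 * j + 1) : ℝ) * t ^ (2 * j + 1) * s ^ (n - 2 * j - 1)

/-- The map `Φ(s,t) = (x_n(s,t), y_n(s,t), s² + t²)` from `ℝ²` to `ℝ³`. -/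
noncomputable def Phi (n : ℕ) (p : ℝ × ℝ) : ℝ × ℝ × ℝ :=
  (xPoly n p.1 p.2, yPoly n p.1 p.2, p.1 ^ 2 + p.2 ^ 2)

theorem sum_range_eq_sum_even_add_sum_odd {M : Type*} [AddCommMonoid M] (f : ℕ → M) (n : ℕ) :
    ∑ k ∈ Finset.range n, f k =
      ∑ j ∈ Finset.range ((n + 1) / 2), f (2 * j) + ∑ j ∈ Finset.range (n / 2), f (2 * j + 1) := by
  induction n with
  | zero => simp
  | succ n ih =>
    have half_add_two : (n + 1 + 1) / 2 = n / 2 + 1 := by lia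
    rw [Finset.sum_range_succ, ih, half_add_two]
    obtain ⟨m, rfl | rfl⟩ := n.even_or_odd'
    · have half_succ : (2 * m + 1) / 2 = m := by lia
      rw [half_succ, Nat.mul_div_cancel_left m two_pos, Finset.sum_range_succ, add_right_comm]
    · have half : (2 * m + 1) / 2 = m := by lia
      have half_succ : (2 * m + 1 + 1) / 2 = m + 1 := by lia
      rw [half, half_succ, Finset.sum_range_succ (fun j ↦ f (2 * j + 1)), add_assoc]

theorem add_mul_pow_of_sq_eq_neg_one {R : Type*} [CommRing R] {i : R} (hi : i ^ 2 = -1)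
    (s t : R) (n : ℕ) :
    (s + t * i) ^ n =
      ∑ j ∈ Finset.range (n / 2 + 1),
          (-1) ^ j * (n.choose (2 * j) : R) * t ^ (2 * j) * s ^ (n - 2 * j) +
        (∑ j ∈ Finset.range ((n + 1) / 2),
          (-1) ^ j * (n.choose (2 * j + 1) : R) * t ^ (2 * j + 1) * s ^ (n - 2 * j - 1)) * i := by
  have even_pow (j : ℕ) : i ^ (2 * j) = (-1) ^ j := by rw [pow_mul, hi]
  have odd_pow (j : ℕ) : i ^ (2 * j + 1) = (-1) ^ j * i := by rw [pow_succ, even_pow]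
  have half_add_two : (n + 1 + 1) / 2 = n / 2 + 1 := by lia
  rw [add_comm s, add_pow, sum_range_eq_sum_even_add_sum_odd, half_add_two, Finset.sum_mul]
  congr 1 <;> refine Finset.sum_congr rfl fun j _ ↦ ?_
  · rw [mul_pow, even_pow]
    ring
  · rw [mul_pow, odd_pow, Nat.sub_sub]
    ring

theorem mk_pow_eq_mk_xPoly_yPoly (n : ℕ) (s t : ℝ) :
    (⟨s, t⟩ : ℂ) ^ n = ⟨xPoly n s t, yPoly n s t⟩ := by
  rw [Complex.mk_eq_add_mul_I, Complex.mk_eq_add_mul_I,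
    add_mul_pow_of_sq_eq_neg_one Complex.I_sq, xPoly, yPoly]
  push_cast
  rfl

theorem Phi_eq_iff_pow_eq_and_normSq_eq {n : ℕ} {s t u v w : ℝ} :
    Phi n (s, t) = (u, v, w) ↔ (⟨s, t⟩ : ℂ) ^ n = ⟨u, v⟩ ∧ Complex.normSq ⟨s, t⟩ = w := by
  rw [mk_pow_eq_mk_xPoly_yPoly, Complex.mk.injEq, Complex.normSq_mk, Phi, Prod.mk.injEq,
    Prod.mk.injEq, sq, sq, and_assoc]

theorem mem_range_Phi_iff {n : ℕ} {u v w : ℝ} :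
    (u, v, w) ∈ Set.range (Phi n) ↔ ∃ z : ℂ, z ^ n = ⟨u, v⟩ ∧ Complex.normSq z = w := by
  rw [Set.mem_range, ← Complex.equivRealProd.exists_congr_right]
  exact exists_congr fun _ ↦ Phi_eq_iff_pow_eq_and_normSq_eq

theorem exists_pow_eq_and_map_eq_iff {K R F : Type*} [Field K] [IsAlgClosed K] [Semiring R]
    [LinearOrder R] [IsStrictOrderedRing R] [FunLike F K R] [MonoidHomClass F K R] {f : F}
    (hf : ∀ z, 0 ≤ f z) {n : ℕ} (hn : n ≠ 0) {a : K} {r : R} :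
    (∃ z, z ^ n = a ∧ f z = r) ↔ f a = r ^ n ∧ 0 ≤ r := by
  constructor
  · rintro ⟨z, rfl, rfl⟩
    exact ⟨map_pow f z n, hf z⟩
  · rintro ⟨ha, hr⟩
    obtain ⟨z, rfl⟩ := IsAlgClosed.exists_pow_nat_eq a (Nat.pos_of_ne_zero hn)
    rw [map_pow] at ha
    exact ⟨z, rfl, (pow_left_inj₀ (hf z) hr hn).mp ha⟩

/-- The image of `Φ` is exactly `{(u,v,w) : u² + v² = w^n, w ≥ 0}`. -/
theorem Phi_range (n : ℕ) (hn : 1 ≤ n) :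
    Set.range (Phi n) = {q : ℝ × ℝ × ℝ |
      q.1 ^ 2 + q.2.1 ^ 2 = q.2.2 ^ n ∧ 0 ≤ q.2.2} := by
  ext ⟨u, v, w⟩
  calc (u, v, w) ∈ Set.range (Phi n)
    _ ↔ ∃ z : ℂ, z ^ n = ⟨u, v⟩ ∧ Complex.normSq z = w := mem_range_Phi_iff
    _ ↔ Complex.normSq ⟨u, v⟩ = w ^ n ∧ 0 ≤ w :=
      exists_pow_eq_and_map_eq_iff Complex.normSq_nonneg (Nat.one_le_iff_ne_zero.mp hn)
    _ ↔ u ^ 2 + v ^ 2 = w ^ n ∧ 0 ≤ w := by rw [Complex.normSq_mk, sq, sq]
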